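/- (Recurrence and difference relations for the Tratnik functions.) Under the stated hypotheses, for all integers n₁, n₂, m₁, m₂ ≥ 0 with n₁+n₂ ≤ N and m₁+m₂ ≤ N: (i) (m₁−j⁽²⁾+j⁽³⁾)(m₁−j⁽²⁾+j⁽³⁾+1)·𝒯_{n₁,n₂}(m₁,m₂) = ψ_{n₁+1,n₂}·𝒯_{n₁+1,n₂}(m₁,m₂) + ψ⁰⁰_{n₁,n₂}·𝒯_{n₁,n₂}(m₁,m₂) + ψ_{n₁,n₂}·𝒯_{n₁−1,n₂}(m₁,m₂); (ii) (n₂−j⁽⁰⁾−j⁽⁴⁾−1)(n₂−j⁽⁰⁾−j⁽⁴⁾)·𝒯_{n₁,n₂}(m₁,m₂) = ρ^{𝔯²}_{m₁,m₂+1}·𝒯_{n₁,n₂}(m₁,m₂+1) + ρ^{𝔯²,00}_{m₁,m₂}·𝒯_{n₁,n₂}(m₁,m₂) + ρ^{𝔯²}_{m₁,m₂}·𝒯_{n₁,n₂}(m₁,m₂−1), where ρ^{𝔯²} and ρ^{𝔯²,00} denote the coefficients ρ and ρ⁰⁰ evaluated with (j⁽¹⁾,j⁽²⁾,j⁽³⁾,j⁽⁴⁾,j⁽⁰⁾)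 replaced by 𝔯²𝑱 := (j⁽²⁾, −j⁽³⁾−1, −j⁽⁴⁾−1, j⁽⁰⁾, j⁽¹⁾) (N is unchanged under this substitution), and terms with indices outside the admissible range are understood to vanish. -/

import Mathlib

noncomputable section

open Finset Real

/-- Pochhammer symbol `(y)_k = y(y+1)⋯(y+k−1)` for real `y`. -/
def poch (y : ℝ) (k : ℕ) : ℝ := ∏ i ∈ Finset.range k, (y + i)

/-- The terminating Racah function `r_n(m; α, β, −𝒩−1, δ)` on the grid `{0,…,𝒩}`:
`r_n(m) = ∑_{k=0}^{n} (−n)_k (n+α+β+1)_k (−m)_k (m−𝒩+δ)_k /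
  ((α+1)_k (β+δ+1)_k (−𝒩)_k k!)`. -/
def racah (𝒩 : ℕ) (α β δ : ℝ) (n m : ℕ) : ℝ :=
  ∑ k ∈ Finset.range (n + 1),
    (poch (-(n : ℝ)) k * poch ((n : ℝ) + α + β + 1) k * poch (-(m : ℝ)) k *
        poch ((m : ℝ) - (𝒩 : ℝ) + δ) k) /
      (poch (α + 1) k * poch (β + δ + 1) k * poch (-(𝒩 : ℝ)) k * (Nat.factorial k : ℝ))

/-- Coefficient `A_n` of the Racah recurrence relation. -/
def coeffA (𝒩 : ℕ) (α β δ : ℝ) (n : ℕ) : ℝ :=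
  ((n : ℝ) + α + 1) * ((n : ℝ) + β + δ + 1) * ((n : ℝ) - (𝒩 : ℝ)) * ((n : ℝ) + α + β + 1) /
    ((2 * (n : ℝ) + α + β + 1) * (2 * (n : ℝ) + α + β + 2))

/-- Coefficient `C_n` of the Racah recurrence relation. -/
def coeffC (𝒩 : ℕ) (α β δ : ℝ) (n : ℕ) : ℝ :=
  (n : ℝ) * ((n : ℝ) + α + β + (𝒩 : ℝ) + 1) * ((n : ℝ) + α - δ) * ((n : ℝ) + β) /
    ((2 * (n : ℝ) + α + β) * (2 * (n : ℝ) + α + β + 1))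

/-- Coefficient `B_m` of the Racah difference relation. -/
def coeffB (𝒩 : ℕ) (α β δ : ℝ) (m : ℕ) : ℝ :=
  ((m : ℝ) + α + 1) * ((m : ℝ) + β + δ + 1) * ((m : ℝ) - (𝒩 : ℝ)) * ((m : ℝ) - (𝒩 : ℝ) + δ) /
    ((2 * (m : ℝ) - (𝒩 : ℝ) + δ) * (2 * (m : ℝ) - (𝒩 : ℝ) + δ + 1))

/-- Coefficient `D_m` of the Racah difference relation. -/
def coeffD (𝒩 : ℕ) (α β δ : ℝ) (m : ℕ) : ℝ :=
  (m : ℝ) * ((m : ℝ) - (𝒩 : ℝ) - 1 - α + δ) * ((m : ℝ) - (𝒩 : ℝ) - 1 - β) * ((m : ℝ) + δ) /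
    ((2 * (m : ℝ) - (𝒩 : ℝ) - 1 + δ) * (2 * (m : ℝ) - (𝒩 : ℝ) + δ))

/-- Normalization constant `κ = (α−δ+1)_𝒩 (β+1)_𝒩 / ((α+β+2)_𝒩 (−δ)_𝒩)`. -/
def kappa (𝒩 : ℕ) (α β δ : ℝ) : ℝ :=
  poch (α - δ + 1) 𝒩 * poch (β + 1) 𝒩 / (poch (α + β + 2) 𝒩 * poch (-δ) 𝒩)

/-- The orthonormalized Racah function `𝒫_n(m; α, β, −𝒩−1, δ)`. -/
def Pfun (𝒩 : ℕ) (α β δ : ℝ) (n m : ℕ) : ℝ :=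
  Real.sqrt (kappa 𝒩 α β δ) *
    (∏ i ∈ Finset.range n,
      coeffA 𝒩 α β δ i / Real.sqrt (coeffA 𝒩 α β δ i * coeffC 𝒩 α β δ (i + 1))) *
    (∏ j ∈ Finset.range m,
      coeffB 𝒩 α β δ j / Real.sqrt (coeffB 𝒩 α β δ j * coeffD 𝒩 α β δ (j + 1))) *
    racah 𝒩 α β δ n m

/-- The positivity conditions making `𝒫_·(·; α, β, −𝒩−1, δ)` well defined. -/
def PosCond (𝒩 : ℕ) (α β δ : ℝ) : Prop :=
  (∀ i < 𝒩, 0 < coeffA 𝒩 α β δ i * coeffC 𝒩 α β δ (i + 1)) ∧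
  (∀ j < 𝒩, 0 < coeffB 𝒩 α β δ j * coeffD 𝒩 α β δ (j + 1)) ∧
  0 < kappa 𝒩 α β δ

/-- The bivariate Tratnik function
`𝒯_{n₁,n₂}(m₁,m₂) = 𝒫_{n₁}(m₁; −2j⁽²⁾−1, −2j⁽¹⁾−1, n₂−N−1, N−n₂−2j⁽²⁾+2j⁽³⁾+1)
· 𝒫_{n₂}(m₂; −2j⁽⁰⁾−1, −2j⁽⁴⁾−1, m₁−N−1, N−m₁−2j⁽⁰⁾−2j⁽¹⁾−1)`
for admissible indices, and `0` outside the admissible range. -/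
def Tratnik (j0 j1 j2 j3 j4 : ℝ) (N : ℕ) (n1 n2 m1 m2 : ℕ) : ℝ :=
  if n1 + n2 ≤ N ∧ m1 + m2 ≤ N ∧ n2 + m1 ≤ N then
    Pfun (N - n2) (-2*j2 - 1) (-2*j1 - 1) ((N : ℝ) - n2 - 2*j2 + 2*j3 + 1) n1 m1 *
      Pfun (N - m1) (-2*j0 - 1) (-2*j4 - 1) ((N : ℝ) - m1 - 2*j0 - 2*j1 - 1) n2 m2
  else 0

/-- `μ_n = (n−j⁽¹⁾−j⁽²⁾−1)(n−j⁽¹⁾−j⁽²⁾)`. -/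
def muN (j1 j2 : ℝ) (n : ℕ) : ℝ := ((n : ℝ) - j1 - j2 - 1) * ((n : ℝ) - j1 - j2)

/-- `μ̂_p = (p−j⁽⁰⁾−j⁽⁴⁾−1)(p−j⁽⁰⁾−j⁽⁴⁾)`. -/
def muP (j0 j4 : ℝ) (p : ℕ) : ℝ := ((p : ℝ) - j0 - j4 - 1) * ((p : ℝ) - j0 - j4)

/-- `μ⁽ⁱ⁾ = j⁽ⁱ⁾(j⁽ⁱ⁾+1)`. -/
def mcc (j : ℝ) : ℝ := j * (j + 1)

/-- The off-diagonal coefficient `ψ_{n,p}` of the generator `C₂₃`. -/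
def psiCo (j0 j1 j2 j3 j4 : ℝ) (N : ℕ) (n p : ℕ) : ℝ :=
  Real.sqrt (((n : ℝ) * (2*j1 + 1 - n) * (2*j2 + 1 - n) * (2*j1 + 2*j2 + 2 - n) *
      ((N : ℝ) - n - p + 2*j3 + 2) * ((N : ℝ) - n - p + 1) *
      ((p : ℝ) - n - N + 2*j1 + 2*j2 + 1) * ((n : ℝ) - p - N + 2*j0 + 2*j4)) /
    ((2*j1 + 2*j2 + 2 - 2*(n : ℝ))^2 * (2*j1 + 2*j2 + 1 - 2*(n : ℝ)) *
      (2*j1 + 2*j2 + 3 - 2*(n : ℝ))))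

/-- The off-diagonal coefficient `ρ_{n,p}` of the generator `C₃₄`. -/
def rhoCo (j0 j1 j2 j3 j4 : ℝ) (N : ℕ) (n p : ℕ) : ℝ :=
  Real.sqrt (((p : ℝ) * (2*j4 + 1 - p) * (2*j0 + 1 - p) * (2*j4 + 2*j0 + 2 - p) *
      ((N : ℝ) - n - p + 2*j3 + 2) * ((N : ℝ) - n - p + 1) *
      ((p : ℝ) - n - N + 2*j1 + 2*j2) * ((n : ℝ) - p - N + 2*j0 + 2*j4 + 1)) /
    ((2*j0 + 2*j4 + 2 - 2*(p : ℝ))^2 * (2*j0 + 2*j4 + 1 - 2*(p : ℝ)) *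
      (2*j0 + 2*j4 + 3 - 2*(p : ℝ))))

/-- The diagonal coefficient `ψ⁰⁰_{n,p}` of the generator `C₂₃`. -/
def psi00 (j0 j1 j2 j3 j4 : ℝ) (n p : ℕ) : ℝ :=
  (muN j1 j2 n + mcc j2 - mcc j1) * (muP j0 j4 p - mcc j3 - muN j1 j2 n) /
    (2 * muN j1 j2 n) + mcc j2 + mcc j3

/-- The diagonal coefficient `ρ⁰⁰_{n,p}` of the generator `C₃₄`. -/
def rho00 (j0 j1 j2 j3 j4 : ℝ) (n p : ℕ) : ℝ :=
  (muP j0 j4 p + mcc j3 - muN j1 j2 n) * (mcc j0 - mcc j4 - muP j0 j4 p) /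
    (2 * muP j0 j4 p) + mcc j3 + mcc j4

/-!
Writing `t_k(x) = (−x)_k (x+u)_k`, the operator
`f ↦ A (f(x+1) − f(x)) + C (f(x−1) − f(x))` is bidiagonal on the `t_k`, and the coefficients
of the Racah function are exactly those for which the resulting sum telescopes to an
eigenvalue equation. Symmetrizing it gives the three-term recurrence of `𝒫_n(m)` in `n`, and
multiplying by the second Racah factor, which does not involve `n₁`, gives (i).

Exchanging degree and variable maps a Racah function to one with other parameters (Leonard
duality). Applied to both factors it gives
`𝒯_{n₁,n₂}(m₁,m₂; 𝑱) = 𝒯_{m₂,m₁}(n₂,n₁; 𝑱*)` with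
`𝑱* = (j⁽²⁾, j⁽¹⁾, j⁽⁰⁾, −j⁽⁴⁾−1, −j⁽³⁾−1)` in the order `j⁽⁰⁾, …, j⁽⁴⁾`, and since
`ψ_{m₂,m₁}(𝑱*) = ρ_{m₁,m₂}(𝔯²𝑱)`, relation (ii) for `𝑱` is relation (i) for `𝑱*`.
-/

section Pochhammer

lemma poch_zero (y : ℝ) : poch y 0 = 1 := by simp [poch]

lemma poch_succ (y : ℝ) (k : ℕ) : poch y (k + 1) = poch y k * (y + k) :=
  Finset.prod_range_succ _ k

lemma poch_succ_left (y : ℝ) (k : ℕ) : poch y (k + 1) = y * poch (y + 1) k := by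
  simp only [poch, Finset.prod_range_succ', Nat.cast_zero, add_zero, Nat.cast_succ]
  rw [mul_comm]
  congr 1
  exact Finset.prod_congr rfl fun i _ => by ring

lemma poch_neg_natCast_eq_zero {n k : ℕ} (h : n < k) : poch (-(n : ℝ)) k = 0 :=
  Finset.prod_eq_zero (Finset.mem_range.mpr h) (neg_add_cancel _)

lemma poch_one_sub_sub (y : ℝ) (k : ℕ) : poch (1 - y - k) k = (-1) ^ k * poch y k := by
  induction k with
  | zero => simp [poch_zero]
  | succ k ih =>
    have hshift : 1 - y - ((k + 1 : ℕ) : ℝ) + 1 = 1 - y - k := by push_cast; ring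
    rw [poch_succ_left, hshift, ih, poch_succ]
    push_cast
    ring

end Pochhammer

section QuadraticBasis

/-- The product `(−x)_k (x+u)_k`, a polynomial of degree `k` in `x (x + u)`. The Racah function
is expanded in these both in its degree and in its variable. -/
def quadBasis (u x : ℝ) (k : ℕ) : ℝ := poch (-x) k * poch (x + u) k

lemma quadBasis_zero (u x : ℝ) : quadBasis u x 0 = 1 := by simp [quadBasis, poch_zero]

lemma quadBasis_succ (u x : ℝ) (k : ℕ) :
    quadBasis u x (k + 1) = quadBasis u x k * ((k : ℝ) * (k + u) - x * (x + u)) := by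
  simp only [quadBasis, poch_succ]
  ring

lemma quadBasis_natCast_eq_zero {n k : ℕ} (u : ℝ) (h : n < k) : quadBasis u n k = 0 := by
  rw [quadBasis, poch_neg_natCast_eq_zero h, zero_mul]

lemma quadBasis_forward_difference (u x : ℝ) (k : ℕ) :
    quadBasis u (x + 1) (k + 1) - quadBasis u x (k + 1) =
      -((k + 1) * (2 * x + u + 1)) * quadBasis (u + 1) x k := by
  have hnext : quadBasis u (x + 1) (k + 1) =
      -(x + 1) * poch (-x) k * (poch (x + (u + 1)) k * (x + u + 1 + k)) := by
    rw [quadBasis, poch_succ_left, poch_succ, neg_add, neg_add_cancel_right, add_right_comm x,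
      add_assoc x]
  have hself : quadBasis u x (k + 1) =
      poch (-x) k * (-x + k) * ((x + u) * poch (x + (u + 1)) k) := by
    rw [quadBasis, poch_succ, poch_succ_left (x + u), add_assoc x]
  rw [hnext, hself, quadBasis]
  ring

lemma mul_quadBasis_add_one (u x : ℝ) (k : ℕ) :
    (x + u) * quadBasis (u + 1) x k = (x + u + k) * quadBasis u x k := by
  have hraise : (x + u) * poch (x + (u + 1)) k = poch (x + u) k * (x + u + k) := by
    rw [← poch_succ, poch_succ_left, add_assoc x]
  rw [quadBasis, quadBasis]
  linear_combination poch (-x) k * hraise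

lemma mul_quadBasis_add_one_sub_one (u x : ℝ) (k : ℕ) :
    x * quadBasis (u + 1) (x - 1) k = (x - k) * quadBasis u x k := by
  have hraise : -x * poch (-(x - 1)) k = poch (-x) k * (-x + k) := by
    rw [← poch_succ, poch_succ_left, neg_sub, neg_add_eq_sub]
  rw [quadBasis, quadBasis, sub_add_add_cancel]
  linear_combination -poch (x + u) k * hraise

end QuadraticBasis

section Recurrence

variable {x u a b c A C : ℝ}

-- `hA` and `hC` are cleared of denominators so that they also cover the ends of the grid,
-- where `A` or `C` vanishes and `2x+u+1` or `2x+u−1` may be zero.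
lemma quadBasis_three_term (hx : 2 * x + u ≠ 0)
    (hA : A * ((2 * x + u) * (2 * x + u + 1)) = (x + a) * (x + b) * (x + c) * (x + u))
    (hC : C * ((2 * x + u - 1) * (2 * x + u)) = x * (x + u - a) * (x + u - b) * (x + u - c))
    (k : ℕ) :
    A * (quadBasis u (x + 1) (k + 1) - quadBasis u x (k + 1)) +
        C * (quadBasis u (x - 1) (k + 1) - quadBasis u x (k + 1)) =
      (k + 1) * (k + a + b + c - u) * quadBasis u x (k + 1) -
        (k + 1) * (a + k) * (b + k) * (c + k) * quadBasis u x k := by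
  have hforward : A * (2 * x + u) * (quadBasis u (x + 1) (k + 1) - quadBasis u x (k + 1)) =
      -((k + 1) * (x + a) * (x + b) * (x + c) * (x + u + k)) * quadBasis u x k := by
    rw [quadBasis_forward_difference]
    linear_combination -(k + 1) * quadBasis (u + 1) x k * hA -
      (k + 1) * (x + a) * (x + b) * (x + c) * mul_quadBasis_add_one u x k
  have hbackward : C * (2 * x + u) * (quadBasis u (x - 1) (k + 1) - quadBasis u x (k + 1)) =
      (k + 1) * (x + u - a) * (x + u - b) * (x + u - c) * (x - k) * quadBasis u x k := by
    have hdiff := quadBasis_forward_difference u (x - 1) k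
    rw [sub_add_cancel] at hdiff
    linear_combination -C * (2 * x + u) * hdiff + (k + 1) * quadBasis (u + 1) (x - 1) k * hC +
      (k + 1) * (x + u - a) * (x + u - b) * (x + u - c) * mul_quadBasis_add_one_sub_one u x k
  apply mul_left_cancel₀ hx
  linear_combination hforward + hbackward -
    (2 * x + u) * (k + 1) * (k + a + b + c - u) * quadBasis_succ u x k

lemma sum_quadBasis_three_term {lam : ℝ} {s : ℕ → ℝ} {K : ℕ} (hx : 2 * x + u ≠ 0)
    (hA : A * ((2 * x + u) * (2 * x + u + 1)) = (x + a) * (x + b) * (x + c) * (x + u))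
    (hC : C * ((2 * x + u - 1) * (2 * x + u)) = x * (x + u - a) * (x + u - b) * (x + u - c))
    (hs : ∀ k < K, s (k + 1) * ((k + 1) * (a + k) * (b + k) * (c + k)) =
      s k * (k * (k + (a + b + c - u - 1)) - lam))
    (hK : s K * (K * (K + (a + b + c - u - 1)) - lam) = 0) :
    lam * ∑ k ∈ range (K + 1), quadBasis u x k * s k =
      A * ∑ k ∈ range (K + 1), quadBasis u (x + 1) k * s k
      - (A + C) * ∑ k ∈ range (K + 1), quadBasis u x k * s k
      + C * ∑ k ∈ range (K + 1), quadBasis u (x - 1) k * s k := by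
  have htelescope : ∀ L ≤ K,
      A * ∑ k ∈ range (L + 1), quadBasis u (x + 1) k * s k
        - (A + C) * ∑ k ∈ range (L + 1), quadBasis u x k * s k
        + C * ∑ k ∈ range (L + 1), quadBasis u (x - 1) k * s k =
      lam * ∑ k ∈ range (L + 1), quadBasis u x k * s k
        + s L * (L * (L + (a + b + c - u - 1)) - lam) * quadBasis u x L := by
    intro L hL
    induction L with
    | zero =>
      simp only [zero_add, Finset.sum_range_one, quadBasis_zero, Nat.cast_zero]
      ring
    | succ L ih =>
      simp only [Finset.sum_range_succ _ (L + 1)]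
      push_cast
      linear_combination ih (by omega) - quadBasis u x L * hs L hL +
        s (L + 1) * quadBasis_three_term hx hA hC L
  rw [htelescope K le_rfl, hK, zero_mul, add_zero]

end Recurrence

section Racah

variable {M n m : ℕ} {α β δ : ℝ}

/-- The coefficient of `(−n)_k (n+α+β+1)_k` in the Racah function, with the variable `m` allowed
to be any real `y`. -/
def racahCoeff (M : ℕ) (α β δ y : ℝ) (k : ℕ) : ℝ :=
  quadBasis (δ - M) y k / (poch (α + 1) k * poch (β + δ + 1) k * poch (-(M : ℝ)) k * k.factorial)

lemma racah_eq_sum {K : ℕ} (hn : n ≤ K) :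
    racah M α β δ n m =
      ∑ k ∈ range (K + 1), quadBasis (α + β + 1) n k * racahCoeff M α β δ m k := by
  have hsubset : range (n + 1) ⊆ range (K + 1) := by gcongr
  rw [racah, ← Finset.sum_subset hsubset]
  · refine Finset.sum_congr rfl fun k _ => ?_
    have hdegree : (n : ℝ) + α + β + 1 = n + (α + β + 1) := by ring
    have hvariable : (m : ℝ) - M + δ = m + (δ - M) := by ring
    rw [hdegree, hvariable, quadBasis, racahCoeff, quadBasis, mul_div_assoc', ← mul_assoc]
  · intro k _ hk
    rw [quadBasis_natCast_eq_zero _ (by simpa using hk), zero_mul]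

lemma racahCoeff_succ {y : ℝ} {k : ℕ} (hα : α + 1 + k ≠ 0) (hβ : β + δ + 1 + k ≠ 0)
    (hk : k < M) :
    racahCoeff M α β δ y (k + 1) *
        ((k + 1) * (α + 1 + k) * (β + δ + 1 + k) * (-(M : ℝ) + k)) =
      racahCoeff M α β δ y k * (k * (k + (δ - M)) - y * (y + (δ - M))) := by
  have hM : -(M : ℝ) + k ≠ 0 := by
    rw [neg_add_eq_sub, sub_ne_zero]
    exact_mod_cast hk.ne
  have hk' : (k : ℝ) + 1 ≠ 0 := by positivity
  rw [racahCoeff, racahCoeff, quadBasis_succ, poch_succ, poch_succ, poch_succ,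
    Nat.factorial_succ]
  push_cast
  field_simp

lemma racahCoeff_last (hm : m ≤ M) :
    racahCoeff M α β δ m M * (M * (M + (δ - M)) - m * (m + (δ - M))) = 0 := by
  rw [racahCoeff, div_mul_eq_mul_div, ← quadBasis_succ,
    quadBasis_natCast_eq_zero _ (Nat.lt_succ_of_le hm), zero_div]

lemma coeffA_self (M : ℕ) (α β δ : ℝ) : coeffA M α β δ M = 0 := by simp [coeffA]

lemma coeffC_zero (M : ℕ) (α β δ : ℝ) : coeffC M α β δ 0 = 0 := by simp [coeffC]

-- Because `x / 0 = 0`, a nonzero `A_n` or `C_n` has nonzero denominators; this is how the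
-- positivity conditions control the denominators below.
lemma coeffA_mul_denominator (hA : ∀ k < M, coeffA M α β δ k ≠ 0) (hn : n ≤ M) :
    coeffA M α β δ n * ((2 * n + (α + β + 1)) * (2 * n + (α + β + 1) + 1)) =
      (n + (α + 1)) * (n + (β + δ + 1)) * (n + -(M : ℝ)) * (n + (α + β + 1)) := by
  obtain rfl | hlt := hn.eq_or_lt
  · rw [coeffA_self]
    ring
  · have hdenominator := (div_ne_zero_iff.mp (hA n hlt)).2
    rw [coeffA, div_mul_eq_mul_div, div_eq_iff hdenominator]
    ring

lemma coeffC_mul_denominator (hC : ∀ k < M, coeffC M α β δ (k + 1) ≠ 0) (hn : n ≤ M) :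
    coeffC M α β δ n * ((2 * n + (α + β + 1) - 1) * (2 * n + (α + β + 1))) =
      n * (n + (α + β + 1) - (α + 1)) * (n + (α + β + 1) - (β + δ + 1)) *
        (n + (α + β + 1) - -(M : ℝ)) := by
  obtain _ | k := n
  · rw [coeffC_zero]
    simp
  · have hdenominator := (div_ne_zero_iff.mp (hC k hn)).2
    rw [coeffC, div_mul_eq_mul_div, div_eq_iff hdenominator]
    ring

lemma two_mul_add_ne_zero (hA : ∀ k < M, coeffA M α β δ k ≠ 0)
    (hC : ∀ k < M, coeffC M α β δ (k + 1) ≠ 0) (hn : n ≤ M) (hM : 0 < M) :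
    2 * (n : ℝ) + (α + β + 1) ≠ 0 := by
  rw [← add_assoc, ← add_assoc]
  obtain rfl | hlt := hn.eq_or_lt
  · obtain ⟨k, rfl⟩ := Nat.exists_eq_succ_of_ne_zero hM.ne'
    exact right_ne_zero_of_mul (div_ne_zero_iff.mp (hC k k.lt_succ_self)).2
  · exact left_ne_zero_of_mul (div_ne_zero_iff.mp (hA n hlt)).2

lemma add_one_add_ne_zero_of_coeffA {k : ℕ} (hA : coeffA M α β δ k ≠ 0) :
    α + 1 + k ≠ 0 ∧ β + δ + 1 + k ≠ 0 := by
  simp only [coeffA, div_ne_zero_iff, mul_ne_zero_iff] at hA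
  obtain ⟨⟨⟨⟨hα, hβ⟩, -⟩, -⟩, -⟩ := hA
  exact ⟨by convert hα using 1; ring, by convert hβ using 1; ring⟩

theorem racah_recurrence (hA : ∀ k < M, coeffA M α β δ k ≠ 0)
    (hC : ∀ k < M, coeffC M α β δ (k + 1) ≠ 0) (hn : n ≤ M) (hm : m ≤ M) :
    m * (m + (δ - M)) * racah M α β δ n m =
      coeffA M α β δ n * racah M α β δ (n + 1) m
      - (coeffA M α β δ n + coeffC M α β δ n) * racah M α β δ n m
      + coeffC M α β δ n * racah M α β δ (n - 1) m := by
  obtain rfl | hM := M.eq_zero_or_pos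
  · obtain rfl := Nat.le_zero.mp hn
    obtain rfl := Nat.le_zero.mp hm
    simp [coeffA_self, coeffC_zero]
  have hexponent : α + 1 + (β + δ + 1) + -(M : ℝ) - (α + β + 1) - 1 = δ - M := by ring
  have hsum := sum_quadBasis_three_term (lam := m * (m + (δ - M))) (K := M)
    (s := racahCoeff M α β δ m)
    (two_mul_add_ne_zero hA hC hn hM) (coeffA_mul_denominator hA hn)
    (coeffC_mul_denominator hC hn)
    (fun k hk => by
      rw [hexponent]
      exact racahCoeff_succ (add_one_add_ne_zero_of_coeffA (hA k hk)).1
        (add_one_add_ne_zero_of_coeffA (hA k hk)).2 hk)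
    (by
      rw [hexponent]
      exact racahCoeff_last hm)
  have hup : coeffA M α β δ n *
        ∑ k ∈ range (M + 1), quadBasis (α + β + 1) (n + 1) k * racahCoeff M α β δ m k =
      coeffA M α β δ n * racah M α β δ (n + 1) m := by
    obtain rfl | hlt := hn.eq_or_lt
    · rw [coeffA_self, zero_mul, zero_mul]
    · rw [racah_eq_sum (Nat.succ_le_of_lt hlt), Nat.cast_succ]
  have hdown : coeffC M α β δ n *
        ∑ k ∈ range (M + 1), quadBasis (α + β + 1) (n - 1) k * racahCoeff M α β δ m k =
      coeffC M α β δ n * racah M α β δ (n - 1) m := by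
    obtain _ | l := n
    · rw [coeffC_zero, zero_mul, zero_mul]
    · rw [Nat.add_sub_cancel, racah_eq_sum (Nat.le_of_succ_le hn), Nat.cast_succ,
        add_sub_cancel_right]
  rwa [hup, hdown, ← racah_eq_sum hn] at hsum

end Racah

section Symmetrization

variable {A C : ℕ → ℝ} {M n : ℕ}

/-- The factor that turns the off-diagonal entries `A_n`, `C_{n+1}` of a three-term recurrence
into `√(A_n C_{n+1})` on both sides of the diagonal. -/
def symmetrizer (A C : ℕ → ℝ) (n : ℕ) : ℝ := ∏ i ∈ range n, A i / √(A i * C (i + 1))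

lemma sqrt_mul_symmetrizer_succ (hpos : 0 < A n * C (n + 1)) :
    √(A n * C (n + 1)) * symmetrizer A C (n + 1) = A n * symmetrizer A C n := by
  have hsqrt := (Real.sqrt_pos.mpr hpos).ne'
  rw [symmetrizer, Finset.prod_range_succ, ← symmetrizer]
  field_simp

lemma sqrt_mul_symmetrizer (hpos : 0 < A n * C (n + 1)) :
    √(A n * C (n + 1)) * symmetrizer A C n = C (n + 1) * symmetrizer A C (n + 1) := by
  have hsqrt := (Real.sqrt_pos.mpr hpos).ne'
  rw [symmetrizer, symmetrizer, Finset.prod_range_succ]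
  field_simp
  rw [Real.sq_sqrt hpos.le]

lemma symmetrizer_recurrence {r : ℕ → ℝ} {lam : ℝ} (hpos : ∀ i < M, 0 < A i * C (i + 1))
    (hA : A M = 0) (hC : C 0 = 0) (hn : n ≤ M)
    (hrec : lam * r n = A n * r (n + 1) - (A n + C n) * r n + C n * r (n - 1)) :
    lam * (symmetrizer A C n * r n) =
      √(A n * C (n + 1)) * (symmetrizer A C (n + 1) * r (n + 1))
      - (A n + C n) * (symmetrizer A C n * r n)
      + √(A (n - 1) * C n) * (symmetrizer A C (n - 1) * r (n - 1)) := by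
  have hup : √(A n * C (n + 1)) * symmetrizer A C (n + 1) = A n * symmetrizer A C n := by
    obtain rfl | hlt := hn.eq_or_lt
    · simp [hA]
    · exact sqrt_mul_symmetrizer_succ (hpos n hlt)
  have hdown : √(A (n - 1) * C n) * symmetrizer A C (n - 1) = C n * symmetrizer A C n := by
    obtain _ | l := n
    · simp [hC]
    · exact sqrt_mul_symmetrizer (hpos l hn)
  linear_combination symmetrizer A C n * hrec - r (n + 1) * hup - r (n - 1) * hdown

end Symmetrization

section Orthonormal

variable {M n m : ℕ} {α β δ β' δ' : ℝ}

lemma Pfun_eq_symmetrizer_mul_racah (M : ℕ) (α β δ : ℝ) (n m : ℕ) :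
    Pfun M α β δ n m = √(kappa M α β δ) * symmetrizer (coeffA M α β δ) (coeffC M α β δ) n *
      symmetrizer (coeffB M α β δ) (coeffD M α β δ) m * racah M α β δ n m := rfl

theorem Pfun_recurrence (hpos : PosCond M α β δ) (hn : n ≤ M) (hm : m ≤ M) :
    m * (m + (δ - M)) * Pfun M α β δ n m =
      √(coeffA M α β δ n * coeffC M α β δ (n + 1)) * Pfun M α β δ (n + 1) m
      - (coeffA M α β δ n + coeffC M α β δ n) * Pfun M α β δ n m
      + √(coeffA M α β δ (n - 1) * coeffC M α β δ n) * Pfun M α β δ (n - 1) m := by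
  have hracah := racah_recurrence (fun k hk => left_ne_zero_of_mul (hpos.1 k hk).ne')
    (fun k hk => right_ne_zero_of_mul (hpos.1 k hk).ne') hn hm
  have hsymm := symmetrizer_recurrence (r := fun n => racah M α β δ n m) hpos.1
    (coeffA_self M α β δ) (coeffC_zero M α β δ) hn hracah
  simp only [Pfun_eq_symmetrizer_mul_racah]
  linear_combination
    √(kappa M α β δ) * symmetrizer (coeffB M α β δ) (coeffD M α β δ) m * hsymm

/-- `β', δ'` are the parameters of the Racah family obtained from `β, δ` by exchanging degree
and variable; `𝒩 = M` and `α` are kept. The relation says that the quadratic lattices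
`n (n+α+β+1)` and `m (m+δ−M)` trade places. -/
def RacahDual (M : ℕ) (α β δ β' δ' : ℝ) : Prop :=
  α + β' + 1 = δ - M ∧ α + β + 1 = δ' - M

namespace RacahDual

lemma symm (h : RacahDual M α β δ β' δ') : RacahDual M α β' δ' β δ := ⟨h.2, h.1⟩

lemma coeffA_eq (h : RacahDual M α β δ β' δ') : coeffA M α β' δ' = coeffB M α β δ := by
  obtain ⟨rfl, rfl⟩ : β' = δ - M - 1 - α ∧ δ' = α + β + 1 + M :=
    ⟨by linarith [h.1], by linarith [h.2]⟩
  funext m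
  unfold coeffA coeffB
  congr 1 <;> ring

lemma coeffC_eq (h : RacahDual M α β δ β' δ') : coeffC M α β' δ' = coeffD M α β δ := by
  obtain ⟨rfl, rfl⟩ : β' = δ - M - 1 - α ∧ δ' = α + β + 1 + M :=
    ⟨by linarith [h.1], by linarith [h.2]⟩
  funext m
  unfold coeffC coeffD
  congr 1 <;> ring

lemma kappa_eq (h : RacahDual M α β δ β' δ') : kappa M α β' δ' = kappa M α β δ := by
  have hα : α - δ' + 1 = 1 - (β + 1) - M := by linarith [h.2]
  have hβ : β' + 1 = 1 - (α - δ + 1) - M := by linarith [h.1]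
  have hαβ : α + β' + 2 = 1 - -δ - M := by linarith [h.1]
  have hδ : -δ' = 1 - (α + β + 2) - M := by linarith [h.2]
  have hsign : ((-1 : ℝ) ^ M) * (-1) ^ M = 1 := by simp [← mul_pow]
  rw [kappa, hα, hβ, hαβ, hδ, poch_one_sub_sub, poch_one_sub_sub, poch_one_sub_sub,
    poch_one_sub_sub, kappa]
  congr 1
  · linear_combination poch (β + 1) M * poch (α - δ + 1) M * hsign
  · linear_combination poch (-δ) M * poch (α + β + 2) M * hsign

lemma racah_eq (h : RacahDual M α β δ β' δ') : racah M α β' δ' m n = racah M α β δ n m := by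
  have hsum : β' + δ' + 1 = β + δ + 1 := by linarith [h.1, h.2]
  have hβ : α + β' + 1 = δ - M := h.1
  rw [racah_eq_sum (le_max_right n m), racah_eq_sum (le_max_left n m)]
  refine Finset.sum_congr rfl fun k _ => ?_
  rw [racahCoeff, racahCoeff, hsum, hβ, ← h.2]
  ring

lemma Pfun_eq (h : RacahDual M α β δ β' δ') : Pfun M α β' δ' m n = Pfun M α β δ n m := by
  simp only [Pfun_eq_symmetrizer_mul_racah, h.kappa_eq, h.racah_eq, h.coeffA_eq, h.coeffC_eq,
    ← h.symm.coeffA_eq, ← h.symm.coeffC_eq]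
  ring

lemma posCond (h : RacahDual M α β δ β' δ') (hpos : PosCond M α β δ) : PosCond M α β' δ' := by
  obtain ⟨hAC, hBD, hκ⟩ := hpos
  rw [PosCond, h.kappa_eq, h.coeffA_eq, h.coeffC_eq, ← h.symm.coeffA_eq, ← h.symm.coeffC_eq]
  exact ⟨hBD, hAC, hκ⟩

end RacahDual

end Orthonormal

section Tratnik

variable {j0 j1 j2 j3 j4 : ℝ} {N n p n1 n2 m1 m2 : ℕ}

lemma psiCo_eq_sqrt_coeffA_mul_coeffC (hNdef : (N : ℝ) = j1 + j2 - j3 + j4 + j0) (hp : p ≤ N) :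
    psiCo j0 j1 j2 j3 j4 N n p =
      √(coeffA (N - p) (-2 * j2 - 1) (-2 * j1 - 1) ((N : ℝ) - p - 2 * j2 + 2 * j3 + 1) (n - 1) *
        coeffC (N - p) (-2 * j2 - 1) (-2 * j1 - 1) ((N : ℝ) - p - 2 * j2 + 2 * j3 + 1) n) := by
  obtain _ | n := n
  · simp [psiCo, coeffC]
  have hA : coeffA (N - p) (-2 * j2 - 1) (-2 * j1 - 1) ((N : ℝ) - p - 2 * j2 + 2 * j3 + 1) n =
      -((2 * j2 + 1 - (n + 1 : ℕ)) * ((n + 1 : ℕ) - p - N + 2 * j0 + 2 * j4) *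
        (N - (n + 1 : ℕ) - p + 1) * (2 * j1 + 2 * j2 + 2 - (n + 1 : ℕ))) /
      ((2 * j1 + 2 * j2 + 3 - 2 * (n + 1 : ℕ)) * (2 * j1 + 2 * j2 + 2 - 2 * (n + 1 : ℕ))) := by
    obtain rfl : j3 = j1 + j2 + j4 + j0 - N := by linarith
    rw [coeffA, Nat.cast_sub hp]
    push_cast
    congr 1 <;> ring
  have hC : coeffC (N - p) (-2 * j2 - 1) (-2 * j1 - 1) ((N : ℝ) - p - 2 * j2 + 2 * j3 + 1)
        (n + 1) =
      -((n + 1 : ℕ) * (p - (n + 1 : ℕ) - N + 2 * j1 + 2 * j2 + 1) *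
        (N - (n + 1 : ℕ) - p + 2 * j3 + 2) * (2 * j1 + 1 - (n + 1 : ℕ))) /
      ((2 * j1 + 2 * j2 + 2 - 2 * (n + 1 : ℕ)) * (2 * j1 + 2 * j2 + 1 - 2 * (n + 1 : ℕ))) := by
    rw [coeffC, Nat.cast_sub hp]
    congr 1 <;> ring
  rw [psiCo, Nat.add_sub_cancel, hA, hC, div_mul_div_comm, neg_mul_neg, sq]
  congr 2 <;> ac_rfl

-- With `x = n + (α+β+2)/2` the summands on the left are `A_n` and `C_n`. The reflection
-- `x ↦ 1 − x` exchanges them, so their sum depends only on `x (x − 1)`, which is `μ_n`.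
lemma div_add_reflected_div {x a b c d : ℝ} (hx : x ≠ 0) (hx₁ : x - 1 ≠ 0)
    (hx₂ : 2 * x - 1 ≠ 0) :
    (x + a) * (x + b) * (x + c) * (x + d) / ((2 * x - 1) * (2 * x)) +
        (x - 1 - a) * (x - 1 - b) * (x - 1 - c) * (x - 1 - d) / (2 * (x - 1) * (2 * x - 1)) =
      ((x - 1) * x + a * b) * ((x - 1) * x + c * d) / (2 * ((x - 1) * x)) +
        (a + b + 1) * (c + d + 1) / 2 := by
  field_simp
  rw [div_eq_iff (by rwa [mul_comm])]
  ring

lemma psi00_eq_sub_coeffA_add_coeffC (hNdef : (N : ℝ) = j1 + j2 - j3 + j4 + j0)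
    (hj1 : (N : ℝ) ≤ 2 * j1) (hj2 : (N : ℝ) ≤ 2 * j2) (hnp : n + p ≤ N) :
    psi00 j0 j1 j2 j3 j4 n p = (j3 - j2) * (j3 - j2 + 1) -
      (coeffA (N - p) (-2 * j2 - 1) (-2 * j1 - 1) ((N : ℝ) - p - 2 * j2 + 2 * j3 + 1) n +
        coeffC (N - p) (-2 * j2 - 1) (-2 * j1 - 1) ((N : ℝ) - p - 2 * j2 + 2 * j3 + 1) n) := by
  have hnpR : (n : ℝ) + p ≤ N := by exact_mod_cast hnp
  obtain rfl : j3 = j1 + j2 + j4 + j0 - N := by linarith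
  unfold psi00 coeffA coeffC muN muP mcc
  rw [Nat.cast_sub (by omega)]
  obtain hx | hx := eq_or_ne ((n : ℝ) - j1 - j2) 0
  -- Here `μ_n = 0`, and the numerators over the vanishing denominators vanish too.
  · obtain ⟨rfl, hN, hp, hn⟩ : j1 = j2 ∧ (N : ℝ) = 2 * j1 ∧ (p : ℝ) = 0 ∧ (n : ℝ) = 2 * j1 := by
      refine ⟨?_, ?_, ?_, ?_⟩ <;> linarith [p.cast_nonneg (α := ℝ)]
    rw [hN, hp, hn]
    ring_nf
  · have hlt : (n : ℝ) - j1 - j2 < 0 :=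
      lt_of_le_of_ne (by linarith [p.cast_nonneg (α := ℝ)]) hx
    have hsum := div_add_reflected_div (a := j1 - j2) (b := -(j1 + j2 + 1)) (c := p + j1 + j2 - N)
      (d := j1 + j2 + 1 - N - p + 2 * j4 + 2 * j0) hx (by linarith) (by linarith)
    rw [eq_sub_iff_add_eq, ← eq_sub_iff_add_eq']
    convert hsum using 1
    · congr 2 <;> ring
    · rw [add_assoc (_ / _), sub_add_eq_sub_sub_swap, sub_eq_neg_add, ← neg_div]
      congr 2 <;> ring

theorem Tratnik_recurrence (hNdef : (N : ℝ) = j1 + j2 - j3 + j4 + j0)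
    (hj1 : (N : ℝ) ≤ 2 * j1) (hj2 : (N : ℝ) ≤ 2 * j2) (hn : n1 + n2 ≤ N)
    (hpos : PosCond (N - n2) (-2 * j2 - 1) (-2 * j1 - 1) ((N : ℝ) - n2 - 2 * j2 + 2 * j3 + 1)) :
    ((m1 : ℝ) - j2 + j3) * ((m1 : ℝ) - j2 + j3 + 1) * Tratnik j0 j1 j2 j3 j4 N n1 n2 m1 m2 =
      psiCo j0 j1 j2 j3 j4 N (n1 + 1) n2 * Tratnik j0 j1 j2 j3 j4 N (n1 + 1) n2 m1 m2
      + psi00 j0 j1 j2 j3 j4 n1 n2 * Tratnik j0 j1 j2 j3 j4 N n1 n2 m1 m2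
      + psiCo j0 j1 j2 j3 j4 N n1 n2 * Tratnik j0 j1 j2 j3 j4 N (n1 - 1) n2 m1 m2 := by
  by_cases hm : m1 + m2 ≤ N ∧ n2 + m1 ≤ N
  swap
  · simp [Tratnik, hm]
  have hn2 : n2 ≤ N := by omega
  have hracah := Pfun_recurrence (n := n1) (m := m1) hpos (by omega) (by omega)
  rw [Nat.cast_sub hn2] at hracah
  have hup : psiCo j0 j1 j2 j3 j4 N (n1 + 1) n2 * Tratnik j0 j1 j2 j3 j4 N (n1 + 1) n2 m1 m2 =
      psiCo j0 j1 j2 j3 j4 N (n1 + 1) n2 *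
        (Pfun (N - n2) (-2 * j2 - 1) (-2 * j1 - 1) ((N : ℝ) - n2 - 2 * j2 + 2 * j3 + 1)
          (n1 + 1) m1 *
        Pfun (N - m1) (-2 * j0 - 1) (-2 * j4 - 1) ((N : ℝ) - m1 - 2 * j0 - 2 * j1 - 1) n2 m2) := by
    obtain rfl | hlt := hn.eq_or_lt
    · simp [psiCo]
    · rw [Tratnik, if_pos (by omega)]
  rw [hup, Tratnik, if_pos ⟨hn, hm⟩, Tratnik, if_pos (by omega),
    psi00_eq_sub_coeffA_add_coeffC hNdef hj1 hj2 hn, psiCo_eq_sqrt_coeffA_mul_coeffC hNdef hn2,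
    psiCo_eq_sqrt_coeffA_mul_coeffC hNdef hn2, Nat.add_sub_cancel]
  linear_combination
    Pfun (N - m1) (-2 * j0 - 1) (-2 * j4 - 1) ((N : ℝ) - m1 - 2 * j0 - 2 * j1 - 1) n2 m2 * hracah

lemma racahDual_Tratnik_factor (hp : p ≤ N) :
    RacahDual (N - p) (-2 * j0 - 1) (-2 * j4 - 1) ((N : ℝ) - p - 2 * j0 - 2 * j1 - 1)
      (-2 * j1 - 1) ((N : ℝ) - p - 2 * j0 + 2 * (-j4 - 1) + 1) := by
  rw [RacahDual, Nat.cast_sub hp]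
  constructor <;> ring

lemma Tratnik_dual (j0 j1 j2 j3 j4 : ℝ) (N n1 n2 m1 m2 : ℕ) :
    Tratnik j2 j1 j0 (-j4 - 1) (-j3 - 1) N m2 m1 n2 n1 =
      Tratnik j0 j1 j2 j3 j4 N n1 n2 m1 m2 := by
  by_cases h : n1 + n2 ≤ N ∧ m1 + m2 ≤ N ∧ n2 + m1 ≤ N
  · have hfirst := (racahDual_Tratnik_factor (j0 := j2) (j1 := j1) (j4 := -j3 - 1)
      (by omega : n2 ≤ N)).Pfun_eq (n := m1) (m := n1)
    have hsecond := (racahDual_Tratnik_factor (j0 := j0) (j1 := j1) (j4 := j4)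
      (by omega : m1 ≤ N)).Pfun_eq (n := n2) (m := m2)
    rw [neg_sub, sub_neg_eq_add, add_sub_cancel_left] at hfirst
    rw [Tratnik, if_pos (by omega), Tratnik, if_pos h, hfirst, hsecond, mul_comm]
  · rw [Tratnik, if_neg (by omega), Tratnik, if_neg h]

lemma rhoCo_eq_psiCo (j0 j1 j2 j3 j4 : ℝ) (N n p : ℕ) :
    rhoCo j0 j1 j2 j3 j4 N n p = psiCo j1 j0 j4 j3 j2 N p n := by
  rw [rhoCo, psiCo, sub_right_comm (N : ℝ) n p, add_comm (2 * j4)]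
  congr 2
  ac_rfl

lemma rho00_eq_psi00 (j0 j1 j2 j3 j4 : ℝ) (n p : ℕ) :
    rho00 j0 j1 j2 j3 j4 n p = psi00 j1 j0 j4 j3 j2 p n := by
  unfold rho00 psi00 muN muP
  ring

theorem Tratnik_difference (hNdef : (N : ℝ) = j1 + j2 - j3 + j4 + j0)
    (hj0 : (N : ℝ) ≤ 2 * j0) (hj1 : (N : ℝ) ≤ 2 * j1) (hm : m1 + m2 ≤ N)
    (hpos : PosCond (N - m1) (-2 * j0 - 1) (-2 * j4 - 1) ((N : ℝ) - m1 - 2 * j0 - 2 * j1 - 1)) :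
    ((n2 : ℝ) - j0 - j4 - 1) * ((n2 : ℝ) - j0 - j4) * Tratnik j0 j1 j2 j3 j4 N n1 n2 m1 m2 =
      rhoCo j1 j2 (-j3 - 1) (-j4 - 1) j0 N m1 (m2 + 1) *
          Tratnik j0 j1 j2 j3 j4 N n1 n2 m1 (m2 + 1)
      + rho00 j1 j2 (-j3 - 1) (-j4 - 1) j0 m1 m2 * Tratnik j0 j1 j2 j3 j4 N n1 n2 m1 m2
      + rhoCo j1 j2 (-j3 - 1) (-j4 - 1) j0 N m1 m2 *
          Tratnik j0 j1 j2 j3 j4 N n1 n2 m1 (m2 - 1) := by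
  have hposDual := (racahDual_Tratnik_factor (by omega)).posCond hpos
  have hdual := Tratnik_recurrence (m1 := n2) (m2 := n1)
    (show (N : ℝ) = j1 + j0 - (-j4 - 1) + (-j3 - 1) + j2 by linarith) hj1 hj0
    (by omega : m2 + m1 ≤ N) hposDual
  simp only [Tratnik_dual] at hdual
  rw [rhoCo_eq_psiCo, rhoCo_eq_psiCo, rho00_eq_psi00]
  linear_combination hdual

end Tratnik

theorem stmt17_general (j0 j1 j2 j3 j4 : ℝ) (N : ℕ)
    (hj0 : (N : ℝ) ≤ 2 * j0) (hj1 : (N : ℝ) ≤ 2 * j1) (hj2 : (N : ℝ) ≤ 2 * j2)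
    (hNdef : (N : ℝ) = j1 + j2 - j3 + j4 + j0)
    (hpos1 : ∀ n2 : ℕ, n2 ≤ N →
      PosCond (N - n2) (-2 * j2 - 1) (-2 * j1 - 1) ((N : ℝ) - n2 - 2 * j2 + 2 * j3 + 1))
    (hpos2 : ∀ m1 : ℕ, m1 ≤ N →
      PosCond (N - m1) (-2 * j0 - 1) (-2 * j4 - 1) ((N : ℝ) - m1 - 2 * j0 - 2 * j1 - 1)) :
    ∀ n1 n2 m1 m2 : ℕ, n1 + n2 ≤ N → m1 + m2 ≤ N →
      (((m1 : ℝ) - j2 + j3) * ((m1 : ℝ) - j2 + j3 + 1) *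
          Tratnik j0 j1 j2 j3 j4 N n1 n2 m1 m2 =
        psiCo j0 j1 j2 j3 j4 N (n1 + 1) n2 * Tratnik j0 j1 j2 j3 j4 N (n1 + 1) n2 m1 m2
        + psi00 j0 j1 j2 j3 j4 n1 n2 * Tratnik j0 j1 j2 j3 j4 N n1 n2 m1 m2
        + psiCo j0 j1 j2 j3 j4 N n1 n2 * Tratnik j0 j1 j2 j3 j4 N (n1 - 1) n2 m1 m2) ∧
      (((n2 : ℝ) - j0 - j4 - 1) * ((n2 : ℝ) - j0 - j4) *
          Tratnik j0 j1 j2 j3 j4 N n1 n2 m1 m2 =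
        rhoCo j1 j2 (-j3 - 1) (-j4 - 1) j0 N m1 (m2 + 1) *
            Tratnik j0 j1 j2 j3 j4 N n1 n2 m1 (m2 + 1)
        + rho00 j1 j2 (-j3 - 1) (-j4 - 1) j0 m1 m2 *
            Tratnik j0 j1 j2 j3 j4 N n1 n2 m1 m2
        + rhoCo j1 j2 (-j3 - 1) (-j4 - 1) j0 N m1 m2 *
            Tratnik j0 j1 j2 j3 j4 N n1 n2 m1 (m2 - 1)) :=
  fun _ n2 m1 _ hn hm =>
    ⟨Tratnik_recurrence hNdef hj1 hj2 hn (hpos1 n2 (by omega)),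
      Tratnik_difference hNdef hj0 hj1 hm (hpos2 m1 (by omega))⟩

/-- Recurrence and difference relations for the Tratnik functions.  In (ii) the
coefficients `ρ`, `ρ⁰⁰` are evaluated at the substituted parameters
`𝔯²𝑱 = (j⁽²⁾, −j⁽³⁾−1, −j⁽⁴⁾−1, j⁽⁰⁾, j⁽¹⁾)`; terms whose indices fall outside the
admissible range vanish (the Tratnik function is `0` there, and `ψ_{0,·} = 0`,
`ρ_{·,0} = 0` by convention of the nonnegative square root). -/
theorem stmt17 (j0 j1 j2 j3 j4 : ℝ) (N : ℕ)
    (h12 : j1 ≥ j2) (h24 : j2 ≥ j4) (h04 : j0 ≥ j4)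
    (h0 : j0 ≥ 0) (h1 : j1 ≥ 0) (h2 : j2 ≥ 0) (h3 : j3 ≥ 0) (h4 : j4 ≥ 0)
    (hup : j1 + j2 + j0 + j4 ≥ j3) (hlow : j3 ≥ j1 + j2 + j0 - j4)
    (hN : 0 < N) (hNdef : (N : ℝ) = j1 + j2 - j3 + j4 + j0)
    (hpos1 : ∀ n2 : ℕ, n2 ≤ N →
      PosCond (N - n2) (-2*j2 - 1) (-2*j1 - 1) ((N : ℝ) - n2 - 2*j2 + 2*j3 + 1))
    (hpos2 : ∀ m1 : ℕ, m1 ≤ N →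
      PosCond (N - m1) (-2*j0 - 1) (-2*j4 - 1) ((N : ℝ) - m1 - 2*j0 - 2*j1 - 1)) :
    ∀ n1 n2 m1 m2 : ℕ, n1 + n2 ≤ N → m1 + m2 ≤ N →
      (((m1 : ℝ) - j2 + j3) * ((m1 : ℝ) - j2 + j3 + 1) *
          Tratnik j0 j1 j2 j3 j4 N n1 n2 m1 m2 =
        psiCo j0 j1 j2 j3 j4 N (n1 + 1) n2 * Tratnik j0 j1 j2 j3 j4 N (n1 + 1) n2 m1 m2
        + psi00 j0 j1 j2 j3 j4 n1 n2 * Tratnik j0 j1 j2 j3 j4 N n1 n2 m1 m2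
        + psiCo j0 j1 j2 j3 j4 N n1 n2 * Tratnik j0 j1 j2 j3 j4 N (n1 - 1) n2 m1 m2) ∧
      (((n2 : ℝ) - j0 - j4 - 1) * ((n2 : ℝ) - j0 - j4) *
          Tratnik j0 j1 j2 j3 j4 N n1 n2 m1 m2 =
        rhoCo j1 j2 (-j3 - 1) (-j4 - 1) j0 N m1 (m2 + 1) *
            Tratnik j0 j1 j2 j3 j4 N n1 n2 m1 (m2 + 1)
        + rho00 j1 j2 (-j3 - 1) (-j4 - 1) j0 m1 m2 *
            Tratnik j0 j1 j2 j3 j4 N n1 n2 m1 m2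
        + rhoCo j1 j2 (-j3 - 1) (-j4 - 1) j0 N m1 m2 *
            Tratnik j0 j1 j2 j3 j4 N n1 n2 m1 (m2 - 1)) := by
  exact stmt17_general j0 j1 j2 j3 j4 N (by linarith) (by linarith) (by linarith) hNdef
    hpos1 hpos2
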